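/- The 4-form Θ01 = θ0i∧θ1i + θ0j∧θ1j + θ0k∧θ1k is primitive with respect to the symplectic form θs: Θ01∧θs = 0. -/

import Mathlib

/-!
Each product `θ0q * θ1q * θs` already vanishes by itself. For instance, in `dy1 ∧ dy2 ∧ θ1i` only
`dy4 ∧ dx3 - dy3 ∧ dx4` survives from `θ1i`, and against it only `dy3 ∧ dx3 + dy4 ∧ dx4` could
survive from `θs`; but each of the resulting four products repeats a factor. Hence every monomial in
the full expansion contains a repeated 1-form, and it suffices to sort the factors with the
anticommutation rule `e8_mul_e8_of_lt` and cancel squares with `e8_mul_self`.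
-/

noncomputable section

open ExteriorAlgebra

/-- Basis 1-forms of the dual of `ℝ^8`, modelled as generators of the exterior algebra of an
8-dimensional real vector space. -/
def e8 (i : Fin 8) : ExteriorAlgebra ℝ (Fin 8 → ℝ) :=
  ExteriorAlgebra.ι ℝ (Pi.single i 1)

def dx1 : ExteriorAlgebra ℝ (Fin 8 → ℝ) := e8 0
def dx2 : ExteriorAlgebra ℝ (Fin 8 → ℝ) := e8 1
def dx3 : ExteriorAlgebra ℝ (Fin 8 → ℝ) := e8 2
def dx4 : ExteriorAlgebra ℝ (Fin 8 → ℝ) := e8 3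
def dy1 : ExteriorAlgebra ℝ (Fin 8 → ℝ) := e8 4
def dy2 : ExteriorAlgebra ℝ (Fin 8 → ℝ) := e8 5
def dy3 : ExteriorAlgebra ℝ (Fin 8 → ℝ) := e8 6
def dy4 : ExteriorAlgebra ℝ (Fin 8 → ℝ) := e8 7

def θ0i : ExteriorAlgebra ℝ (Fin 8 → ℝ) := dy1 * dy2 - dy3 * dy4
def θ0j : ExteriorAlgebra ℝ (Fin 8 → ℝ) := dy1 * dy3 + dy2 * dy4
def θ0k : ExteriorAlgebra ℝ (Fin 8 → ℝ) := dy1 * dy4 - dy2 * dy3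
def θ1i : ExteriorAlgebra ℝ (Fin 8 → ℝ) := dy1 * dx2 - dy2 * dx1 + dy4 * dx3 - dy3 * dx4
def θ1j : ExteriorAlgebra ℝ (Fin 8 → ℝ) := dy1 * dx3 + dy2 * dx4 - dy3 * dx1 - dy4 * dx2
def θ1k : ExteriorAlgebra ℝ (Fin 8 → ℝ) := dy1 * dx4 - dy4 * dx1 + dy3 * dx2 - dy2 * dx3
def θ2i : ExteriorAlgebra ℝ (Fin 8 → ℝ) := dx1 * dx2 - dx3 * dx4
def θ2j : ExteriorAlgebra ℝ (Fin 8 → ℝ) := dx1 * dx3 + dx2 * dx4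
def θ2k : ExteriorAlgebra ℝ (Fin 8 → ℝ) := dx1 * dx4 - dx2 * dx3
def θs : ExteriorAlgebra ℝ (Fin 8 → ℝ) := -(dy1 * dx1 + dy2 * dx2 + dy3 * dx3 + dy4 * dx4)

theorem e8_mul_self (i : Fin 8) : e8 i * e8 i = 0 :=
  ExteriorAlgebra.ι_sq_zero _

/-- Anticommutation, oriented so that rewriting sorts the indices increasingly. -/
theorem e8_mul_e8_of_lt (i j : Fin 8) (_ : i < j) : e8 j * e8 i = -(e8 i * e8 j) :=
  eq_neg_of_add_eq_zero_left (ExteriorAlgebra.ι_add_mul_swap _ _)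

/-- `e8_mul_self` inside a right-associated product. -/
theorem e8_mul_self_mul (i : Fin 8) (z : ExteriorAlgebra ℝ (Fin 8 → ℝ)) :
    e8 i * (e8 i * z) = 0 := by
  rw [← mul_assoc, e8_mul_self, zero_mul]

/-- `e8_mul_e8_of_lt` inside a right-associated product. -/
theorem e8_mul_e8_mul_of_lt (i j : Fin 8) (h : i < j) (z : ExteriorAlgebra ℝ (Fin 8 → ℝ)) :
    e8 j * (e8 i * z) = -(e8 i * (e8 j * z)) := by
  rw [← mul_assoc, e8_mul_e8_of_lt i j h, neg_mul, mul_assoc]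

theorem Theta01_primitive :
    (θ0i * θ1i + θ0j * θ1j + θ0k * θ1k) * θs = 0 := by
  have hi : θ0i * θ1i * θs = 0 := by
    simp [θ0i, θ1i, θs, dx1, dx2, dx3, dx4, dy1, dy2, dy3, dy4, mul_add, add_mul, sub_mul,
      mul_assoc, e8_mul_self, e8_mul_self_mul, e8_mul_e8_of_lt, e8_mul_e8_mul_of_lt]
  have hj : θ0j * θ1j * θs = 0 := by
    simp [θ0j, θ1j, θs, dx1, dx2, dx3, dx4, dy1, dy2, dy3, dy4, mul_add, add_mul,
      mul_assoc, e8_mul_self, e8_mul_self_mul, e8_mul_e8_of_lt, e8_mul_e8_mul_of_lt]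
  have hk : θ0k * θ1k * θs = 0 := by
    simp [θ0k, θ1k, θs, dx1, dx2, dx3, dx4, dy1, dy2, dy3, dy4, mul_add, add_mul, sub_mul,
      mul_assoc, e8_mul_self, e8_mul_self_mul, e8_mul_e8_of_lt, e8_mul_e8_mul_of_lt]
  rw [add_mul, add_mul, hi, hj, hk, add_zero, add_zero]

end
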